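/- Let γ, δ₀ and the test measures be as in the planar curve setup, and write x₀ = γ(0) and R = R(0). Then there exist constants C > 0 and δ₁ ∈ (0, δ₀] such that for all δ ∈ (0, δ₁] and all σ, ε > 0 with max(σ, ε) ≤ δ/4, writing y = γ(δ), one has | W₁(μ_{x₀}^{σ,ε}, μ_y^{σ,ε}) − ‖x₀ − y‖·(1 − ε²/(6R²) + σ²/(3R²)) | ≤ C·δ⁴. -/

import Mathlib

open MeasureTheory Set

/-- The 1-Wasserstein distance: infimum over couplings of the integral of the distance. -/
noncomputable def W1 {X : Type*} [MeasurableSpace X] [PseudoMetricSpace X]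
    (μ ν : Measure X) : ℝ :=
  sInf { c : ℝ | ∃ π : Measure (X × X), IsProbabilityMeasure π ∧
      π.map Prod.fst = μ ∧ π.map Prod.snd = ν ∧ c = ∫ p, dist p.1 p.2 ∂π }

/-- Restriction of the ambient volume measure to a set, normalized to a probability measure. -/
noncomputable def normRestrict {X : Type*} [MeasureSpace X] (s : Set X) : Measure X :=
  (volume s)⁻¹ • volume.restrict s


noncomputable def Jl : EuclideanSpace ℝ (Fin 2) →L[ℝ] EuclideanSpace ℝ (Fin 2) :=
  LinearMap.toContinuousLinearMap
    { toFun := fun v => !₂[-v 1, v 0]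
      map_add' := by intro x y; ext i; fin_cases i <;> simp; ring
      map_smul' := by intro c x; ext i; fin_cases i <;> simp }

lemma Jl_zero (v : EuclideanSpace ℝ (Fin 2)) : Jl v 0 = - v 1 := by simp [Jl]
lemma Jl_one (v : EuclideanSpace ℝ (Fin 2)) : Jl v 1 = v 0 := by simp [Jl]

lemma inner2 (v w : EuclideanSpace ℝ (Fin 2)) : inner ℝ v w = v 0 * w 0 + v 1 * w 1 := by
  simp [PiLp.inner_apply, Fin.sum_univ_two]; ring

lemma normsq2 (v : EuclideanSpace ℝ (Fin 2)) : ‖v‖^2 = v 0 ^2 + v 1 ^2 := by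
  rw [EuclideanSpace.real_norm_sq_eq, Fin.sum_univ_two]

lemma Jl_Jl (v : EuclideanSpace ℝ (Fin 2)) : Jl (Jl v) = - v := by
  ext i; fin_cases i <;> simp [Jl_zero, Jl_one]

/-- Frenet frame. -/
structure Frame (γ T N : ℝ → EuclideanSpace ℝ (Fin 2)) (K : ℝ → ℝ) (s : ℝ) : Prop where
  smγ : ContDiff ℝ (⊤ : ℕ∞) γ
  smN : ContDiff ℝ (⊤ : ℕ∞) N
  smK : ContDiff ℝ (⊤ : ℕ∞) K
  dγ : ∀ a, HasDerivAt γ (T a) a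
  dT : ∀ a, HasDerivAt T (K a • N a) a
  dN : ∀ a, HasDerivAt N (-(K a) • T a) a
  Tn : ∀ a, ‖T a‖ = 1
  hs : s * s = 1
  hN : ∀ a, N a = s • Jl (T a)

lemma exists_frame
    (δ₀ : ℝ) (hδ₀ : 0 < δ₀)
    (γ : ℝ → EuclideanSpace ℝ (Fin 2)) (hγ : ContDiff ℝ (⊤ : ℕ∞) γ)
    (hunit : ∀ α : ℝ, ‖deriv γ α‖ = 1)
    (hcurv : ∀ α ∈ Icc (-δ₀) (2 * δ₀), deriv (deriv γ) α ≠ 0)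
    (R : ℝ → ℝ) (hR : ∀ α : ℝ, R α = ‖deriv (deriv γ) α‖⁻¹)
    (n : ℝ → EuclideanSpace ℝ (Fin 2)) (hn : ∀ α : ℝ, n α = R α • deriv (deriv γ) α) :
    ∃ T N K s, Frame γ T N K s ∧ (∀ α ∈ Icc (-δ₀) (2 * δ₀), n α = N α ∧ K α * R α = 1 ∧ 0 < K α) := by
  have hT : ContDiff ℝ (⊤ : ℕ∞) (deriv γ) := by
    rw [contDiff_infty_iff_deriv] at hγ; exact hγ.2
  have hT2 : ContDiff ℝ (⊤ : ℕ∞) (deriv (deriv γ)) := by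
    rw [contDiff_infty_iff_deriv] at hT; exact hT.2
  set T := deriv γ with hTdef
  have hJ : ContDiff ℝ (⊤ : ℕ∞) (fun a => Jl (T a)) := Jl.contDiff.comp hT
  have dT : ∀ a, HasDerivAt T (deriv T a) a := fun a =>
    (hT.differentiable (by simp)).differentiableAt.hasDerivAt
  have dγ : ∀ a, HasDerivAt γ (T a) a := fun a =>
    (hγ.differentiable (by simp)).differentiableAt.hasDerivAt
  let k : ℝ → ℝ := fun a => inner ℝ (deriv T a) (Jl (T a))
  have hk : ContDiff ℝ (⊤ : ℕ∞) k := hT2.inner ℝ hJ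
  have horth : ∀ a, inner ℝ (T a) (deriv T a) = 0 := by
    intro a
    have h1 : HasDerivAt (fun a => inner ℝ (T a) (T a)) (inner ℝ (T a) (deriv T a) + inner ℝ (deriv T a) (T a)) a :=
      (dT a).inner ℝ (dT a)
    have h2 : (fun a => inner ℝ (T a) (T a)) = fun _ => (1:ℝ) := by
      funext a; rw [real_inner_self_eq_norm_sq, hunit]; norm_num
    rw [h2] at h1
    have := h1.unique (hasDerivAt_const a (1:ℝ))
    rw [real_inner_comm (T a)] at this
    rw [real_inner_comm] at this ⊢
    linarith
  have hT2eq : ∀ a, deriv T a = k a • Jl (T a) := by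
    intro a
    have h1 := horth a
    have h2 := normsq2 (T a)
    rw [hunit] at h2
    rw [inner2] at h1
    have hk' : k a = deriv T a 0 * (- T a 1) + deriv T a 1 * T a 0 := by
      simp only [k, inner2, Jl_zero, Jl_one]
    ext i
    fin_cases i
    · simp [Jl_zero, hk']; linear_combination (deriv T a 0) * h2 - (- T a 0) * h1
    · simp [Jl_one, hk']; linear_combination (deriv T a 1) * h2 + (T a 1) * h1
  have hJn : ∀ a, ‖Jl (T a)‖ = 1 := by
    intro a
    have h2 := normsq2 (T a)
    have h3 := normsq2 (Jl (T a))
    rw [hunit] at h2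
    rw [Jl_zero, Jl_one] at h3
    have : ‖Jl (T a)‖^2 = 1 := by rw [h3]; linarith
    nlinarith [norm_nonneg (Jl (T a))]
  have hkabs : ∀ a, ‖deriv T a‖ = |k a| := by
    intro a
    conv_lhs => rw [hT2eq a]
    rw [norm_smul, hJn, mul_one, Real.norm_eq_abs]
  have hk0 : ∀ α ∈ Icc (-δ₀) (2 * δ₀), k α ≠ 0 := by
    intro a ha h0
    apply hcurv a ha
    rw [hT2eq a, h0, zero_smul]
  obtain ⟨s, hs, hpos⟩ : ∃ s : ℝ, s * s = 1 ∧ ∀ α ∈ Icc (-δ₀) (2 * δ₀), 0 < s * k α := by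
    have hpc : IsPreconnected (Icc (-δ₀) (2 * δ₀)) := isPreconnected_Icc
    by_cases h : ∃ a ∈ Icc (-δ₀) (2 * δ₀), 0 < k a
    · obtain ⟨a, ha, hka⟩ := h
      refine ⟨1, by norm_num, fun b hb => ?_⟩
      by_contra hcon
      have hkb : k b ≤ 0 := by linarith
      obtain ⟨c, hc, hc0⟩ := hpc.intermediate_value hb ha hk.continuous.continuousOn ⟨hkb, hka.le⟩
      exact hk0 c hc hc0
    · push Not at h
      refine ⟨-1, by norm_num, fun b hb => ?_⟩
      have := lt_of_le_of_ne (h b hb) (hk0 b hb)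
      linarith
  refine ⟨T, fun a => s • Jl (T a), fun a => s * k a, s, ⟨hγ, hJ.const_smul s, contDiff_const.mul hk, dγ, ?_, ?_, hunit, hs, fun a => rfl⟩, ?_⟩
  · intro a
    convert dT a using 1
    rw [hT2eq a, smul_smul]; congr 1; linear_combination k a * hs
  · intro a
    have := (Jl.hasFDerivAt.comp_hasDerivAt a (dT a)).const_smul s
    have h3 : Jl (deriv T a) = k a • (- T a) := by
      rw [hT2eq a, map_smul, Jl_Jl]
    have h4 : s • Jl (deriv T a) = -(s * k a) • T a := by
      rw [h3]; simp [smul_smul]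
    rw [h4] at this
    exact this
  · intro a ha
    have hp := hpos a ha
    have habs : |k a| = s * k a := by
      have : |s| = 1 := by
        rcases mul_self_eq_one_iff.mp hs with h | h <;> simp [h]
      rw [← abs_of_pos hp, abs_mul, this, one_mul]
    refine ⟨?_, ?_, hp⟩
    · rw [hn, hR, hkabs, habs]
      conv_lhs => rw [hT2eq a]
      rw [smul_smul]
      congr 1
      have : k a ≠ 0 := hk0 a ha
      have hs0 : s ≠ 0 := by rintro rfl; simp at hs
      field_simp
      linarith
    · rw [hR, hkabs, habs]; exact mul_inv_cancel₀ hp.ne'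

noncomputable def Bf (σ k v : ℝ) : ℝ := (2 * v - k * σ ^ 2) / (1 + √(1 + k ^ 2 * σ ^ 2 - 2 * k * v))

lemma Bf_rel {σ k v : ℝ} (h : 0 ≤ 1 + k ^ 2 * σ ^ 2 - 2 * k * v) :
    Bf σ k v - k * ((Bf σ k v)^2 - σ^2) / 2 = v := by
  have hq := Real.sq_sqrt h
  have hq0 := Real.sqrt_nonneg (1 + k ^ 2 * σ ^ 2 - 2 * k * v)
  unfold Bf
  set q := √(1 + k ^ 2 * σ ^ 2 - 2 * k * v)
  have : 1 + q ≠ 0 := by positivity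
  have hk : k * ((2 * v - k * σ ^ 2) / (1 + q)) = 1 - q := by
    field_simp; linarith
  have hb : ((2 * v - k * σ ^ 2) / (1 + q)) * (1 + q) = 2 * v - k * σ^2 := by field_simp
  set b := ((2 * v - k * σ ^ 2) / (1 + q))
  linear_combination hb / 2 - b/2 * hk

lemma Bf_arg {σ k v : ℝ} (hσ : 0 < σ) (hk : 0 ≤ k) (hkσ : k * σ < 1) (hv : v ≤ σ) :
    0 < 1 + k ^ 2 * σ ^ 2 - 2 * k * v := by
  have : k * v ≤ k * σ := mul_le_mul_of_nonneg_left hv hk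
  nlinarith [mul_pos (sub_pos.2 hkσ) (sub_pos.2 hkσ)]

lemma Bf_mul {σ k v : ℝ} (h : 0 ≤ 1 + k ^ 2 * σ ^ 2 - 2 * k * v) : k * Bf σ k v ≤ 1 := by
  have hq := Real.sq_sqrt h
  have hq0 := Real.sqrt_nonneg (1 + k ^ 2 * σ ^ 2 - 2 * k * v)
  unfold Bf
  set q := √(1 + k ^ 2 * σ ^ 2 - 2 * k * v)
  have : 1 + q ≠ 0 := by positivity
  have hk : k * ((2 * v - k * σ ^ 2) / (1 + q)) = 1 - q := by
    field_simp; linarith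
  linarith

lemma Bf_mem {σ k v : ℝ} (hσ : 0 < σ) (hk : 0 ≤ k) (hkσ : k * σ < 1) (hv : v ∈ Ioo (-σ) σ) :
    Bf σ k v ∈ Ioo (-σ) σ := by
  have ha := (Bf_arg hσ hk hkσ hv.2.le).le
  have hr := Bf_rel ha
  have hm := Bf_mul ha
  set b := Bf σ k v
  have hkσ0 : 0 ≤ k * σ := by positivity
  have h1 : (b + σ) * (1 - k * (b - σ) / 2) = v + σ := by linear_combination hr
  have h2 : (σ - b) * (1 - k * (b + σ) / 2) = σ - v := by linear_combination -hr
  have p1 : 0 < 1 - k * (b - σ) / 2 := by nlinarith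
  have p2 : 0 < 1 - k * (b + σ) / 2 := by nlinarith
  constructor
  · have : 0 < b + σ := by
      by_contra hc
      have := mul_nonpos_of_nonpos_of_nonneg (not_lt.1 hc) p1.le
      linarith [hv.1]
    linarith
  · have : 0 < σ - b := by
      by_contra hc
      have := mul_nonpos_of_nonpos_of_nonneg (not_lt.1 hc) p2.le
      linarith [hv.2]
    linarith

lemma Bf_surj {σ k b : ℝ} (hσ : 0 < σ) (hk : 0 ≤ k) (hkσ : k * σ < 1) (hb : b ∈ Ioo (-σ) σ) :
    ∃ v ∈ Ioo (-σ) σ, Bf σ k v = b := by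
  have hkb : k * b ≤ k * σ := mul_le_mul_of_nonneg_left hb.2.le hk
  have hkσ0 : 0 ≤ k * σ := by positivity
  have hkb' : k * (-σ) ≤ k * b := mul_le_mul_of_nonneg_left hb.1.le hk
  have hv : b - k * (b^2 - σ^2)/2 ∈ Ioo (-σ) σ := by
    have p1 : 0 < 1 - k * (b - σ) / 2 := by nlinarith
    have p2 : 0 < 1 - k * (b + σ) / 2 := by nlinarith
    have h1 := mul_pos (show 0 < b + σ by linarith [hb.1]) p1
    have h2 := mul_pos (show 0 < σ - b by linarith [hb.2]) p2
    constructor <;> nlinarith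
  refine ⟨_, hv, ?_⟩
  have ha := (Bf_arg hσ hk hkσ hv.2.le).le
  have hr := Bf_rel ha
  have hm := Bf_mem hσ hk hkσ hv
  set c := Bf σ k (b - k * (b^2 - σ^2)/2)
  have hkc : k * c ≤ k * σ := mul_le_mul_of_nonneg_left hm.2.le hk
  have : (c - b) * (1 - k * (c + b)/2) = 0 := by linear_combination hr
  rcases mul_eq_zero.1 this with h | h
  · linarith
  · nlinarith

lemma Bf_cont (σ : ℝ) (K : ℝ → ℝ) (hK : Continuous K) :
    Continuous (fun p : ℝ × ℝ => Bf σ (K p.1) p.2) := by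
  unfold Bf
  refine Continuous.div (by fun_prop) (by fun_prop) ?_
  intro p; positivity

lemma Bf_diff (σ : ℝ) (K : ℝ → ℝ) (p : ℝ × ℝ) (hK : DifferentiableAt ℝ K p.1)
    (h : 0 < 1 + K p.1 ^ 2 * σ ^ 2 - 2 * K p.1 * p.2) :
    DifferentiableAt ℝ (fun p : ℝ × ℝ => Bf σ (K p.1) p.2) p := by
  unfold Bf
  have hK' : DifferentiableAt ℝ (fun p : ℝ × ℝ => K p.1) p := 
    DifferentiableAt.comp p hK differentiableAt_fst
  have h1 : DifferentiableAt ℝ (fun p : ℝ × ℝ => 1 + K p.1 ^ 2 * σ ^ 2 - 2 * K p.1 * p.2) p := by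
    fun_prop
  have h2 : DifferentiableAt ℝ (fun p : ℝ × ℝ => 2 * p.2 - K p.1 * σ ^ 2) p := by
    fun_prop
  have h3 : DifferentiableAt ℝ (fun p : ℝ × ℝ => 1 + √(1 + K p.1 ^ 2 * σ ^ 2 - 2 * K p.1 * p.2)) p :=
    (h1.sqrt h.ne').const_add 1
  have h4 : 1 + √(1 + K p.1 ^ 2 * σ ^ 2 - 2 * K p.1 * p.2) ≠ 0 := by positivity
  simp only [div_eq_mul_inv]
  exact h2.mul (h3.inv h4)

lemma Bf_dv (σ : ℝ) (K : ℝ → ℝ) (p : ℝ × ℝ) (hK : DifferentiableAt ℝ K p.1)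
    (h : 0 < 1 + K p.1 ^ 2 * σ ^ 2 - 2 * K p.1 * p.2) :
    fderiv ℝ (fun p : ℝ × ℝ => Bf σ (K p.1) p.2) p (0, 1) * (1 - K p.1 * Bf σ (K p.1) p.2) = 1 := by
  have hd := (Bf_diff σ K p hK h).hasFDerivAt
  obtain ⟨a, v⟩ := p
  simp only at *
  set d := fderiv ℝ (fun p : ℝ × ℝ => Bf σ (K p.1) p.2) (a, v) (0, 1)
  have h1 : HasDerivAt (fun w : ℝ => (a, w)) ((0:ℝ), (1:ℝ)) v := 
    (hasDerivAt_const v a).prodMk (hasDerivAt_id v)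
  have h2 : HasDerivAt (fun w => Bf σ (K a) w) d v := hd.comp_hasDerivAt v h1
  have h3 : HasDerivAt (fun w => Bf σ (K a) w - K a * ((Bf σ (K a) w)^2 - σ^2)/2) 
     (d - K a * (2 * Bf σ (K a) v * d) / 2) v := by
    have := h2.sub ((((h2.pow 2).sub_const (σ^2)).const_mul (K a)).div_const 2)
    exact this.congr_deriv (by norm_num)
  have h4 : (fun w => Bf σ (K a) w - K a * ((Bf σ (K a) w)^2 - σ^2)/2) =ᶠ[nhds v] id := by
    have : ∀ᶠ w in nhds v, 0 < 1 + K a ^ 2 * σ ^ 2 - 2 * K a * w := by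
      refine ContinuousAt.eventually_lt (by fun_prop) (by fun_prop) h
    filter_upwards [this] with w hw
    exact Bf_rel hw.le
  have h5 := (h3.congr_of_eventuallyEq h4.symm).unique (hasDerivAt_id v)
  linarith

lemma map_area (ψ : ℝ × ℝ → EuclideanSpace ℝ (Fin 2)) (hψ : Continuous ψ) (s : Set (ℝ × ℝ))
    (hs : MeasurableSet s) (f' : ℝ × ℝ → (ℝ × ℝ →L[ℝ] ℝ × ℝ))
    (hf : ∀ x ∈ s, HasFDerivAt (fun p => (ψ p 0, ψ p 1)) (f' x) x)
    (hdet : ∀ x ∈ s, |(f' x).det| = 1) (hinj : InjOn ψ s) :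
    Measure.map ψ (volume.restrict s) = volume.restrict (ψ '' s) := by
  let e : EuclideanSpace ℝ (Fin 2) ≃ᵐ ℝ × ℝ :=
    (MeasurableEquiv.toLp 2 (Fin 2 → ℝ)).symm.trans MeasurableEquiv.finTwoArrow
  have he : MeasurePreserving e volume volume := 
    (volume_preserving_finTwoArrow ℝ).comp (EuclideanSpace.volume_preserving_symm_measurableEquiv_toLp (Fin 2))
  have heψ : (fun p => (ψ p 0, ψ p 1)) = e ∘ ψ := by
    funext p; rfl
  have hinj' : InjOn (fun p => (ψ p 0, ψ p 1)) s := by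
    rw [heψ]; exact e.injective.comp_injOn hinj
  have h1 := map_withDensity_abs_det_fderiv_eq_addHaar volume hs.nullMeasurableSet
    (fun x hx => (hf x hx).hasFDerivWithinAt) hinj'
  have h2 : (volume.restrict s).withDensity (fun x => ENNReal.ofReal |(f' x).det|) = volume.restrict s := by
    conv_rhs => rw [← withDensity_one (μ := volume.restrict s)]
    apply withDensity_congr_ae
    filter_upwards [ae_restrict_mem hs] with x hx
    simp [hdet x hx]
  rw [h2, heψ, image_comp, ← Measure.map_map e.measurable hψ.measurable] at h1
  have h3 : Measure.map e (volume.restrict (ψ '' s)) = volume.restrict (e '' (ψ '' s)) := by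
    rw [← he.map_eq, e.restrict_map, e.preimage_image]
  rw [← h3] at h1
  exact e.map_measurableEquiv_injective h1

noncomputable def Psi (γ N : ℝ → EuclideanSpace ℝ (Fin 2)) (K : ℝ → ℝ) (σ : ℝ) (p : ℝ × ℝ) :
    EuclideanSpace ℝ (Fin 2) := γ p.1 + Bf σ (K p.1) p.2 • N p.1

lemma Frame.Psi_cont {γ T N K s} (F : Frame γ T N K s) (σ : ℝ) : Continuous (Psi γ N K σ) := by
  have h1 := F.smγ.continuous
  have h2 := F.smN.continuous
  have h3 := Bf_cont σ K F.smK.continuous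
  unfold Psi
  exact (h1.comp continuous_fst).add (h3.smul (h2.comp continuous_fst))

lemma normRestrict_map {ψ : ℝ × ℝ → EuclideanSpace ℝ (Fin 2)} (hψ : Continuous ψ) {r : Set (ℝ × ℝ)}
    (h : Measure.map ψ (volume.restrict r) = volume.restrict (ψ '' r)) :
    normRestrict (ψ '' r) = Measure.map ψ (normRestrict r) := by
  unfold normRestrict
  rw [Measure.map_smul, ← h]
  congr 2
  have := congrArg (fun m => m univ) h
  rw [Measure.map_apply hψ.measurable MeasurableSet.univ] at this
  simpa using this.symm

lemma hasDerivAt_coord {f : ℝ → EuclideanSpace ℝ (Fin 2)} {f' : EuclideanSpace ℝ (Fin 2)} {a : ℝ}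
    (h : HasDerivAt f f' a) (i : Fin 2) : HasDerivAt (fun x => f x i) (f' i) a :=
  ((EuclideanSpace.proj (𝕜 := ℝ) i).hasFDerivAt).comp_hasDerivAt a h

lemma Frame.mu_eq {γ T N K s} (F : Frame γ T N K s) {δ₀ σ a b : ℝ} (hσ : 0 < σ) (hσδ : σ ≤ δ₀)
    (hab : Ioo a b ⊆ Icc (-δ₀) (2 * δ₀))
    (hK : ∀ α ∈ Icc (-δ₀) (2 * δ₀), 0 < K α ∧ K α * δ₀ < 1)
    (φ : ℝ × ℝ → EuclideanSpace ℝ (Fin 2))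
    (hφ : ∀ α ∈ Icc (-δ₀) (2 * δ₀), ∀ β, φ (α, β) = γ α + β • N α)
    (hinj : InjOn φ (Icc (-δ₀) (2 * δ₀) ×ˢ Icc (-δ₀) δ₀)) :
    normRestrict (φ '' (Ioo a b ×ˢ Ioo (-σ) σ)) =
      Measure.map (Psi γ N K σ) (normRestrict (Ioo a b ×ˢ Ioo (-σ) σ)) := by
  have hKσ : ∀ α ∈ Ioo a b, K α * σ < 1 := fun α hα => by
    have := hK α (hab hα)
    nlinarith
  have hψφ : ∀ p ∈ Ioo a b ×ˢ Ioo (-σ) σ, Psi γ N K σ p = φ (p.1, Bf σ (K p.1) p.2) := by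
    intro p hp
    rw [hφ _ (hab hp.1)]; rfl
  have himg : φ '' (Ioo a b ×ˢ Ioo (-σ) σ) = Psi γ N K σ '' (Ioo a b ×ˢ Ioo (-σ) σ) := by
    ext z
    constructor
    · rintro ⟨⟨α, β⟩, ⟨hα, hβ⟩, rfl⟩
      obtain ⟨v, hv, hvb⟩ := Bf_surj hσ (hK α (hab hα)).1.le (hKσ α hα) hβ
      refine ⟨(α, v), ⟨hα, hv⟩, ?_⟩
      rw [hψφ (α, v) (mk_mem_prod hα hv)]
      simp only [hvb]
    · rintro ⟨⟨α, v⟩, ⟨hα, hv⟩, rfl⟩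
      refine ⟨(α, Bf σ (K α) v), ⟨hα, Bf_mem hσ (hK α (hab hα)).1.le (hKσ α hα) hv⟩, ?_⟩
      rw [hψφ _ ⟨hα, hv⟩]
  have hinjψ : InjOn (Psi γ N K σ) (Ioo a b ×ˢ Ioo (-σ) σ) := by
    rintro ⟨α, v⟩ ⟨hα, hv⟩ ⟨α', v'⟩ ⟨hα', hv'⟩ h
    simp only at hα hα' hv hv'
    rw [hψφ _ ⟨hα, hv⟩, hψφ _ ⟨hα', hv'⟩] at h
    simp only at h
    have m1 := Bf_mem hσ (hK α (hab hα)).1.le (hKσ α hα) hv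
    have m2 := Bf_mem hσ (hK α' (hab hα')).1.le (hKσ α' hα') hv'
    have := hinj ⟨hab hα, ⟨by linarith [m1.1], by linarith [m1.2]⟩⟩
      ⟨hab hα', ⟨by linarith [m2.1], by linarith [m2.2]⟩⟩ h
    simp only [Prod.mk.injEq] at this
    obtain ⟨rfl, hb⟩ := this
    have r1 := Bf_rel (Bf_arg hσ (hK α (hab hα)).1.le (hKσ α hα) hv.2.le).le
    have r2 := Bf_rel (Bf_arg hσ (hK α (hab hα)).1.le (hKσ α hα) hv'.2.le).le
    rw [hb, r2] at r1
    rw [r1]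
  rw [himg]
  apply normRestrict_map (F.Psi_cont σ)
  let b' : ℝ × ℝ → (ℝ × ℝ →L[ℝ] ℝ) := fun p => fderiv ℝ (fun p : ℝ × ℝ => Bf σ (K p.1) p.2) p
  let M : ℝ × ℝ → Fin 2 → Fin 2 → ℝ := fun p i => 
    ![(1 - K p.1 * Bf σ (K p.1) p.2) * T p.1 i + b' p (1, 0) * N p.1 i, b' p (0, 1) * N p.1 i]
  let f' : ℝ × ℝ → (ℝ × ℝ →L[ℝ] ℝ × ℝ) := fun p =>
    (Matrix.toLin (.finTwoProd ℝ) (.finTwoProd ℝ)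
    !![M p 0 0, M p 0 1; M p 1 0, M p 1 1]).toContinuousLinearMap
  have hKd : ∀ a, DifferentiableAt ℝ K a := fun a => (F.smK.differentiable (by simp)).differentiableAt
  refine map_area _ (F.Psi_cont σ) _ (measurableSet_Ioo.prod measurableSet_Ioo) f' ?_ ?_ hinjψ
  · rintro p ⟨hα, hv⟩
    have harg := Bf_arg hσ (hK p.1 (hab hα)).1.le (hKσ p.1 hα) hv.2.le
    have hb := (Bf_diff σ K p (hKd p.1) harg).hasFDerivAt
    have key : ∀ i, HasFDerivAt (fun q => Psi γ N K σ q i)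
        (M p i 0 • ContinuousLinearMap.fst ℝ ℝ ℝ + M p i 1 • ContinuousLinearMap.snd ℝ ℝ ℝ) p := by
      intro i
      have h1 := (hasDerivAt_coord (F.dγ p.1) i).comp_hasFDerivAt p (hasFDerivAt_fst (𝕜 := ℝ) (E := ℝ) (F := ℝ))
      have h2 := (hasDerivAt_coord (F.dN p.1) i).comp_hasFDerivAt p (hasFDerivAt_fst (𝕜 := ℝ) (E := ℝ) (F := ℝ))
      have h3 := h1.add (hb.mul h2)
      refine HasFDerivAt.congr_fderiv h3 ?_
      ext
      · simp [M, b']; ring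
      · simp [M, b']; ring
    simp only [f']
    rw [Matrix.toLin_finTwoProd_toContinuousLinearMap]
    exact (key 0).prodMk (key 1)
  · rintro p ⟨hα, hv⟩
    have harg := Bf_arg hσ (hK p.1 (hab hα)).1.le (hKσ p.1 hα) hv.2.le
    have hdv := Bf_dv σ K p (hKd p.1) harg
    have hT := normsq2 (T p.1)
    rw [F.Tn] at hT
    have : (f' p).det = s := by
      simp only [f', LinearMap.det_toContinuousLinearMap, LinearMap.det_toLin, Matrix.det_fin_two_of]
      simp only [M, b', F.hN]
      simp [Jl_zero, Jl_one]
      linear_combination (s * (T p.1 0 ^2 + T p.1 1 ^2)) * hdv - s * hT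
    rw [this]
    rcases mul_self_eq_one_iff.mp F.hs with h | h <;> simp [h]

lemma normRestrict_prob {a b c d : ℝ} (hab : a < b) (hcd : c < d) :
    IsProbabilityMeasure (normRestrict (Ioo a b ×ˢ Ioo c d)) := by
  constructor
  unfold normRestrict
  simp only [Measure.smul_apply, Measure.restrict_apply_univ, smul_eq_mul]
  have : (volume : Measure (ℝ × ℝ)) (Ioo a b ×ˢ Ioo c d) = ENNReal.ofReal (b - a) * ENNReal.ofReal (d - c) := by
    rw [Measure.volume_eq_prod, Measure.prod_prod]; simp
  apply ENNReal.inv_mul_cancel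
  · rw [this]; simp [hab, hcd]
  · rw [this]; finiteness

lemma normRestrict_refl (δ ε c d : ℝ) :
    Measure.map (fun p : ℝ × ℝ => (δ - p.1, p.2)) (normRestrict (Ioo (0 - ε) (0 + ε) ×ˢ Ioo c d)) =
      normRestrict (Ioo (δ - ε) (δ + ε) ×ˢ Ioo c d) := by
  have hmp : MeasurePreserving (fun p : ℝ × ℝ => (δ - p.1, p.2)) volume volume :=
    (Measure.measurePreserving_sub_left volume δ).prod (MeasurePreserving.id volume)
  have hpre : (fun p : ℝ × ℝ => (δ - p.1, p.2)) ⁻¹' (Ioo (δ - ε) (δ + ε) ×ˢ Ioo c d) = 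
      Ioo (0 - ε) (0 + ε) ×ˢ Ioo c d := by
    ext p
    simp only [mem_preimage, mem_prod, mem_Ioo]
    constructor
    · rintro ⟨⟨h1, h2⟩, h3⟩; exact ⟨⟨by linarith, by linarith⟩, h3⟩
    · rintro ⟨⟨h1, h2⟩, h3⟩; exact ⟨⟨by linarith, by linarith⟩, h3⟩
  have hm : MeasurableSet (Ioo (δ - ε) (δ + ε) ×ˢ Ioo c d) := measurableSet_Ioo.prod measurableSet_Ioo
  unfold normRestrict
  rw [Measure.map_smul, ← hpre, hmp.measure_preimage hm.nullMeasurableSet, 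
    (hmp.restrict_preimage hm).map_eq]

lemma W1_bound {E : Type*} [NormedAddCommGroup E] [InnerProductSpace ℝ E] [MeasurableSpace E]
    [BorelSpace E] [SecondCountableTopology E]
    {X : Type*} [MeasurableSpace X] (ρ : Measure X) [IsProbabilityMeasure ρ]
    (f g : X → E) (hf : Measurable f) (hg : Measurable g) (hfi : Integrable f ρ) (hgi : Integrable g ρ) 
    (e : E) (he : ‖e‖ = 1) (P : X → ℝ) (hP : Integrable P ρ) (c : ℝ)
    (h1 : ∀ᵐ x ∂ρ, P x - c ≤ inner ℝ (g x - f x) e)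
    (h2 : ∀ᵐ x ∂ρ, ‖g x - f x‖ ≤ P x + c) :
    |W1 (ρ.map f) (ρ.map g) - ∫ x, P x ∂ρ| ≤ c := by
  have hfg : Measurable (fun x => (f x, g x)) := hf.prodMk hg
  have hlow : ∀ r ∈ { c : ℝ | ∃ π : Measure (E × E), IsProbabilityMeasure π ∧
      π.map Prod.fst = ρ.map f ∧ π.map Prod.snd = ρ.map g ∧ c = ∫ p, dist p.1 p.2 ∂π },
      (∫ x, P x ∂ρ) - c ≤ r := by
    rintro r ⟨π, hπ, hπ1, hπ2, rfl⟩
    have i1 : Integrable (fun p : E × E => p.1) π := by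
      have : Integrable id (π.map Prod.fst) := by
        rw [hπ1]; exact (integrable_map_measure aestronglyMeasurable_id hf.aemeasurable).2 hfi
      exact (integrable_map_measure aestronglyMeasurable_id measurable_fst.aemeasurable).1 this
    have i2 : Integrable (fun p : E × E => p.2) π := by
      have : Integrable id (π.map Prod.snd) := by
        rw [hπ2]; exact (integrable_map_measure aestronglyMeasurable_id hg.aemeasurable).2 hgi
      exact (integrable_map_measure aestronglyMeasurable_id measurable_snd.aemeasurable).1 this
    have hm : ∀ ν : Measure E, AEStronglyMeasurable (fun z : E => inner ℝ z e) ν := fun ν =>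
      (by fun_prop : Continuous (fun z : E => inner ℝ z e)).aestronglyMeasurable
    have e1 : ∫ p : E × E, inner ℝ p.1 e ∂π = ∫ x, inner ℝ (f x) e ∂ρ := by
      rw [← integral_map measurable_fst.aemeasurable (hm _), hπ1, integral_map hf.aemeasurable (hm _)]
    have e2 : ∫ p : E × E, inner ℝ p.2 e ∂π = ∫ x, inner ℝ (g x) e ∂ρ := by
      rw [← integral_map measurable_snd.aemeasurable (hm _), hπ2, integral_map hg.aemeasurable (hm _)]
    calc (∫ x, P x ∂ρ) - c = ∫ x, (P x - c) ∂ρ := by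
          rw [integral_sub hP (integrable_const c)]; simp
      _ ≤ ∫ x, inner ℝ (g x - f x) e ∂ρ := by
          exact integral_mono_ae (hP.sub (integrable_const c)) ((hgi.sub hfi).inner_const e) h1
      _ = ∫ p : E × E, inner ℝ (p.2 - p.1) e ∂π := by
          simp only [inner_sub_left]
          rw [integral_sub (hgi.inner_const e) (hfi.inner_const e), 
            integral_sub (i2.inner_const e) (i1.inner_const e), e1, e2]
      _ ≤ ∫ p : E × E, dist p.1 p.2 ∂π := by
          refine integral_mono ((i2.sub i1).inner_const e) ?_ ?_
          · simp only [dist_eq_norm]; exact (i1.sub i2).norm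
          · intro p
            simp only
            rw [dist_comm, dist_eq_norm]
            have := real_inner_le_norm (p.2 - p.1) e
            rwa [he, mul_one] at this
  have hmem : ∫ x, ‖g x - f x‖ ∂ρ ∈ { c : ℝ | ∃ π : Measure (E × E), IsProbabilityMeasure π ∧
      π.map Prod.fst = ρ.map f ∧ π.map Prod.snd = ρ.map g ∧ c = ∫ p, dist p.1 p.2 ∂π } := by
    refine ⟨ρ.map (fun x => (f x, g x)), Measure.isProbabilityMeasure_map hfg.aemeasurable, ?_, ?_, ?_⟩
    · rw [Measure.map_map measurable_fst hfg]; rfl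
    · rw [Measure.map_map measurable_snd hfg]; rfl
    · rw [integral_map hfg.aemeasurable]
      · simp only [dist_eq_norm, norm_sub_rev]
      · exact (by fun_prop : Continuous (fun p : E × E => dist p.1 p.2)).aestronglyMeasurable
  have hup : W1 (ρ.map f) (ρ.map g) ≤ ∫ x, ‖g x - f x‖ ∂ρ := csInf_le ⟨_, hlow⟩ hmem
  have hlo : (∫ x, P x ∂ρ) - c ≤ W1 (ρ.map f) (ρ.map g) := le_csInf ⟨_, hmem⟩ hlow
  have h3 : ∫ x, ‖g x - f x‖ ∂ρ ≤ (∫ x, P x ∂ρ) + c := by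
    calc _ ≤ ∫ x, (P x + c) ∂ρ := integral_mono_ae (hgi.sub hfi).norm (hP.add (integrable_const c)) h2
      _ = _ := by rw [integral_add hP (integrable_const c)]; simp
  rw [abs_le]; constructor <;> linarith

section Taylor
variable {F : Type*} [NormedAddCommGroup F] [NormedSpace ℝ F]

lemma mv_pow {g g' : ℝ → F} (hg : ∀ t, HasDerivAt g (g' t) t) (h0 : g 0 = 0) {h c : ℝ} (hh : 0 ≤ h)
    (n : ℕ) (hc : 0 ≤ c) (hb : ∀ t ∈ Icc 0 h, ‖g' t‖ ≤ c * t ^ n) : ‖g h‖ ≤ c * h ^ (n + 1) := by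
  have := norm_image_sub_le_of_norm_deriv_le_segment' (f := g) (f' := g') (a := 0) (b := h) (C := c * h ^ n)
    (fun x _ => (hg x).hasDerivWithinAt) (fun x hx => (hb x ⟨hx.1, hx.2.le⟩).trans (by
      have := hx.1; have := hx.2.le; gcongr)) h ⟨hh, le_rfl⟩
  rw [h0, sub_zero, sub_zero] at this
  rw [pow_succ]; linarith

lemma hasDerivAt_shift {f : ℝ → F} (hf : ContDiff ℝ (⊤ : ℕ∞) f) (s t : ℝ) :
    HasDerivAt (fun t => f (s + t)) (deriv f (s + t)) t ∧ 
    HasDerivAt (fun t => f (s - t)) (- deriv f (s - t)) t := by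
  have hd : ∀ a, HasDerivAt f (deriv f a) a := fun a => 
    (hf.differentiable (by simp)).differentiableAt.hasDerivAt
  exact ⟨(hd (s + t)).comp_const_add s t, (hd (s - t)).comp_const_sub s t⟩

lemma smooth_deriv {f : ℝ → F} (hf : ContDiff ℝ (⊤ : ℕ∞) f) : ContDiff ℝ (⊤ : ℕ∞) (deriv f) := by
  rw [contDiff_infty_iff_deriv] at hf; exact hf.2

variable {s l M : ℝ}

lemma tayA {f : ℝ → F} (hf : ContDiff ℝ (⊤ : ℕ∞) f) (hM : 0 ≤ M)
    (hb : ∀ a ∈ Icc (s - l) (s + l), ‖deriv f a‖ ≤ M) {h : ℝ} (h0 : 0 ≤ h) (hl : h ≤ l) :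
    ‖f (s + h) - f (s - h)‖ ≤ 2 * M * h ^ 1 := by
  refine mv_pow (g := fun h => f (s + h) - f (s - h)) (g' := fun h => deriv f (s + h) - - deriv f (s - h))
    (fun t => (hasDerivAt_shift hf s t).1.sub (hasDerivAt_shift hf s t).2) (by simp) h0 0 (by positivity) ?_
  intro t ht
  have h1 := hb (s + t) ⟨by linarith [ht.1, ht.2], by linarith [ht.1, ht.2]⟩
  have h2 := hb (s - t) ⟨by linarith [ht.1, ht.2], by linarith [ht.1, ht.2]⟩
  have := norm_add_le (deriv f (s + t)) (deriv f (s - t))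
  rw [sub_neg_eq_add]; linarith

lemma tayB {f : ℝ → F} (hf : ContDiff ℝ (⊤ : ℕ∞) f) (hM : 0 ≤ M)
    (hb : ∀ a ∈ Icc (s - l) (s + l), ‖deriv (deriv f) a‖ ≤ M) {h : ℝ} (h0 : 0 ≤ h) (hl : h ≤ l) :
    ‖f (s + h) + f (s - h) - (2:ℝ) • f s‖ ≤ 2 * M * h ^ 2 := by
  refine mv_pow (g := fun h => f (s + h) + f (s - h) - (2:ℝ) • f s) 
    (g' := fun h => deriv f (s + h) + - deriv f (s - h))
    (fun t => ((hasDerivAt_shift hf s t).1.add (hasDerivAt_shift hf s t).2).sub_const _) 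
    (by simp [two_smul]) h0 1 (by positivity) ?_
  intro t ht
  rw [← sub_eq_add_neg]
  exact tayA (smooth_deriv hf) hM hb ht.1 (ht.2.trans hl)

lemma tayC {f : ℝ → F} (hf : ContDiff ℝ (⊤ : ℕ∞) f) (hM : 0 ≤ M)
    (hb : ∀ a ∈ Icc (s - l) (s + l), ‖deriv (deriv (deriv f)) a‖ ≤ M) {h : ℝ} (h0 : 0 ≤ h) (hl : h ≤ l) :
    ‖f (s + h) - f (s - h) - (2 * h) • deriv f s‖ ≤ 2 * M * h ^ 3 := by
  refine mv_pow (g := fun h => f (s + h) - f (s - h) - (2 * h) • deriv f s) 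
    (g' := fun h => deriv f (s + h) - - deriv f (s - h) - ((2:ℝ) * 1) • deriv f s)
    (fun t => ((hasDerivAt_shift hf s t).1.sub (hasDerivAt_shift hf s t).2).sub 
      (((hasDerivAt_id t).const_mul 2).smul_const _)) 
    (by simp) h0 2 (by positivity) ?_
  intro t ht
  rw [sub_neg_eq_add, mul_one]
  exact tayB (smooth_deriv hf) hM hb ht.1 (ht.2.trans hl)

lemma tayD {f : ℝ → F} (hf : ContDiff ℝ (⊤ : ℕ∞) f) (hM : 0 ≤ M)
    (hb : ∀ a ∈ Icc (s - l) (s + l), ‖deriv (deriv (deriv (deriv f))) a‖ ≤ M) {h : ℝ} (h0 : 0 ≤ h) (hl : h ≤ l) :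
    ‖f (s + h) + f (s - h) - (2:ℝ) • f s - (h ^ 2) • deriv (deriv f) s‖ ≤ 2 * M * h ^ 4 := by
  refine mv_pow (g := fun h => f (s + h) + f (s - h) - (2:ℝ) • f s - (h ^ 2) • deriv (deriv f) s) 
    (g' := fun h => deriv f (s + h) + - deriv f (s - h) - (2 * h) • deriv (deriv f) s)
    (fun t => (((hasDerivAt_shift hf s t).1.add (hasDerivAt_shift hf s t).2).sub_const _).sub
      (HasDerivAt.smul_const (by simpa using hasDerivAt_pow 2 t) _)) 
    (by simp [two_smul]) h0 3 (by positivity) ?_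
  intro t ht
  rw [← sub_eq_add_neg]
  exact tayC (smooth_deriv hf) hM hb ht.1 (ht.2.trans hl)

lemma tayE {f : ℝ → F} (hf : ContDiff ℝ (⊤ : ℕ∞) f) (hM : 0 ≤ M)
    (hb : ∀ a ∈ Icc (s - l) (s + l), ‖deriv (deriv (deriv (deriv (deriv f)))) a‖ ≤ M) {h : ℝ} (h0 : 0 ≤ h) (hl : h ≤ l) :
    ‖f (s + h) - f (s - h) - (2 * h) • deriv f s - (h ^ 3 / 3) • deriv (deriv (deriv f)) s‖ ≤ 2 * M * h ^ 5 := by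
  refine mv_pow (g := fun h => f (s + h) - f (s - h) - (2 * h) • deriv f s - (h ^ 3 / 3) • deriv (deriv (deriv f)) s) 
    (g' := fun h => deriv f (s + h) - - deriv f (s - h) - ((2:ℝ) * 1) • deriv f s - (h ^ 2) • deriv (deriv (deriv f)) s)
    (fun t => (((hasDerivAt_shift hf s t).1.sub (hasDerivAt_shift hf s t).2).sub 
      (((hasDerivAt_id t).const_mul 2).smul_const _)).sub
      (HasDerivAt.smul_const (((hasDerivAt_pow 3 t).div_const 3).congr_deriv (by norm_num)) _)) 
    (by simp) h0 4 (by positivity) ?_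
  intro t ht
  rw [sub_neg_eq_add, mul_one]
  exact tayD (smooth_deriv hf) hM hb ht.1 (ht.2.trans hl)

lemma bdd_of_cont {f : ℝ → F} (hf : Continuous f) (a b : ℝ) : ∃ M, ∀ x ∈ Icc a b, ‖f x‖ ≤ M :=
  isCompact_Icc.exists_bound_of_continuousOn hf.continuousOn
end Taylor

lemma Frame.orth {γ T N K s} (F : Frame γ T N K s) (a : ℝ) :
    inner ℝ (T a) (T a) = (1:ℝ) ∧ inner ℝ (N a) (N a) = (1:ℝ) ∧ inner ℝ (T a) (N a) = (0:ℝ) ∧ inner ℝ (N a) (T a) = (0:ℝ)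
    ∧ ∀ w : EuclideanSpace ℝ (Fin 2), ‖w‖ ^ 2 = (inner ℝ w (T a)) ^ 2 + (inner ℝ w (N a)) ^ 2 := by
  have h := normsq2 (T a)
  rw [F.Tn] at h
  have hs := F.hs
  refine ⟨?_, ?_, ?_, ?_, ?_⟩
  · rw [inner2]; linarith
  · rw [inner2, F.hN]; simp [Jl_zero, Jl_one]; linear_combination (T a 0^2 + T a 1^2) * hs - h
  · rw [inner2, F.hN]; simp [Jl_zero, Jl_one]; ring
  · rw [inner2, F.hN]; simp [Jl_zero, Jl_one]; ring
  · intro w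
    rw [inner2, inner2, F.hN, normsq2]; simp [Jl_zero, Jl_one]
    linear_combination (w 0 ^2 + w 1 ^2) * h - ((-w 0 * T a 1 + w 1 * T a 0)^2) * hs

lemma Frame.Nn {γ T N K s} (F : Frame γ T N K s) (a : ℝ) : ‖N a‖ = 1 := by
  have := (F.orth a).2.1
  rw [real_inner_self_eq_norm_sq] at this
  nlinarith [norm_nonneg (N a)]

/-- Quantitative Taylor data. -/
structure TData (γ T N : ℝ → EuclideanSpace ℝ (Fin 2)) (K : ℝ → ℝ) (M : ℝ) : Prop where
  one : 1 ≤ M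
  K0 : ∀ a ∈ Icc (-1:ℝ) 2, |K a| ≤ M
  K1 : ∀ a ∈ Icc (-1:ℝ) 2, |deriv K a| ≤ M
  KL : ∀ a ∈ Icc (-1:ℝ) 2, ∀ b ∈ Icc (-1:ℝ) 2, |K a - K b| ≤ M * |a - b|
  NL : ∀ a ∈ Icc (-1:ℝ) 2, ∀ b ∈ Icc (-1:ℝ) 2, ‖N a - N b‖ ≤ M * |a - b|
  g5 : ∀ s h : ℝ, 0 ≤ h → -1 ≤ s - h → s + h ≤ 2 →
    ‖γ (s + h) - γ (s - h) - (2 * h) • T s - (h ^ 3 / 3) • (deriv K s • N s - (K s)^2 • T s)‖ ≤ M * h ^ 5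
  n3 : ∀ s h : ℝ, 0 ≤ h → -1 ≤ s - h → s + h ≤ 2 →
    ‖N (s + h) - N (s - h) + (2 * h * K s) • T s‖ ≤ M * h ^ 3

lemma Frame.tdata {γ T N K s} (F : Frame γ T N K s) : ∃ M, TData γ T N K M := by
  have hγ1 : deriv γ = T := funext fun a => (F.dγ a).deriv
  have hγ2 : deriv T = fun a => K a • N a := funext fun a => (F.dT a).deriv
  have hN1 : deriv N = fun a => -(K a) • T a := funext fun a => (F.dN a).deriv
  have dK : ∀ a, HasDerivAt K (deriv K a) a := fun a => 
    (F.smK.differentiable (by simp)).differentiableAt.hasDerivAt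
  have hγ3 : deriv (deriv (deriv γ)) = fun a => deriv K a • N a - (K a)^2 • T a := by
    rw [hγ1, hγ2]
    funext a
    have := ((dK a).smul (F.dN a)).deriv
    refine Eq.trans this ?_
    rw [smul_smul]
    module
  have sm3 := smooth_deriv (smooth_deriv (smooth_deriv F.smγ))
  obtain ⟨M1, h1⟩ := bdd_of_cont (smooth_deriv (smooth_deriv sm3)).continuous (-1) 2
  obtain ⟨M2, h2⟩ := bdd_of_cont (smooth_deriv (smooth_deriv (smooth_deriv F.smN))).continuous (-1) 2
  obtain ⟨M3, h3⟩ := bdd_of_cont (F.smK).continuous (-1) 2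
  obtain ⟨M4, h4⟩ := bdd_of_cont (smooth_deriv F.smK).continuous (-1) 2
  let M := 1 + 2 * |M1| + 2 * |M2| + |M3| + |M4|
  have hM : M = 1 + 2 * |M1| + 2 * |M2| + |M3| + |M4| := rfl
  have p1 := abs_nonneg M1
  have p2 := abs_nonneg M2
  have p3 := abs_nonneg M3
  have p4 := abs_nonneg M4
  have q1 := le_abs_self M1
  have q2 := le_abs_self M2
  have q3 := le_abs_self M3
  have q4 := le_abs_self M4
  refine ⟨M, by linarith, fun a ha => ?_, fun a ha => ?_, ?_, ?_, ?_, ?_⟩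
  · have := h3 a ha; rw [Real.norm_eq_abs] at this; linarith
  · have := h4 a ha; rw [Real.norm_eq_abs] at this; linarith
  · intro a ha b hb
    refine (convex_Icc (-1:ℝ) 2).norm_image_sub_le_of_norm_deriv_le (f := K) (C := M) (fun x _ => (dK x).differentiableAt)
      (fun x hx => ?_) hb ha
    have := h4 x hx; linarith
  · intro a ha b hb
    refine (convex_Icc (-1:ℝ) 2).norm_image_sub_le_of_norm_deriv_le (f := N) (C := M) (fun x _ => (F.dN x).differentiableAt)
      (fun x hx => ?_) hb ha
    rw [hN1]; simp only
    rw [norm_smul, F.Tn, norm_neg]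
    have := h3 x hx; linarith
  · intro s h h0 hl hr
    have := tayE F.smγ (abs_nonneg M1) (s := s) (l := h) (fun a ha => 
      (h1 a ⟨by linarith [ha.1], by linarith [ha.2]⟩).trans q1) h0 le_rfl
    rw [hγ3, hγ1] at this
    refine this.trans ?_
    gcongr; linarith
  · intro s h h0 hl hr
    have := tayC F.smN (abs_nonneg M2) (s := s) (l := h) (fun a ha => 
      (h2 a ⟨by linarith [ha.1], by linarith [ha.2]⟩).trans q2) h0 le_rfl
    rw [hN1] at this
    have e : N (s + h) - N (s - h) - (2 * h) • (-K s • T s) = N (s + h) - N (s - h) + (2 * h * K s) • T s := by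
      module
    simp only [e] at this
    refine this.trans ?_
    gcongr; linarith

lemma abs_mul_le' {x y a b : ℝ} (hx : |x| ≤ a) (hy : |y| ≤ b) : |x * y| ≤ a * b := by
  rw [abs_mul]; exact mul_le_mul hx hy (abs_nonneg _) ((abs_nonneg _).trans hx)

lemma b_est {M δ σ k k1 k2 v b1 b2 : ℝ} (hM : 1 ≤ M) (hδ : 0 < δ) (hMδ : 100 * M ^ 3 * δ ≤ 1)
    (hσ0 : 0 ≤ σ) (hσ : σ ≤ δ) (hv : |v| ≤ σ) (hb1 : |b1| ≤ σ) (hb2 : |b2| ≤ σ)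
    (hk : |k| ≤ M) (hk1 : |k1| ≤ M) (h1 : |k1 - k| ≤ M * δ) (h2 : |k2 - k1| ≤ 2 * M * δ)
    (r1 : b1 - k1 * (b1 ^ 2 - σ ^ 2) / 2 = v) (r2 : b2 - k2 * (b2 ^ 2 - σ ^ 2) / 2 = v) :
    |b1 - v - k * (v ^ 2 - σ ^ 2) / 2| ≤ M ^ 2 * δ ^ 3 ∧ |b2 - b1| ≤ 2 * M * δ ^ 3 := by
  have hM0 : 0 < M := by linarith
  have hMsq : M ≤ M ^ 2 := le_self_pow₀ hM (by norm_num)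
  have hM3 : M ≤ M ^ 3 := le_self_pow₀ hM (by norm_num)
  have hMδ' : M * δ ≤ 1/100 := (mul_le_mul_of_nonneg_right hM3 hδ.le).trans (by linarith)
  have sq1 : |b1 ^ 2 - σ ^ 2| ≤ σ ^ 2 := by
    have := sq_le_sq' (neg_le_of_abs_le hb1) (le_of_abs_le hb1)
    rw [abs_le]; constructor <;> nlinarith [sq_nonneg b1]
  have sq2 : |b2 ^ 2 - σ ^ 2| ≤ σ ^ 2 := by
    have := sq_le_sq' (neg_le_of_abs_le hb2) (le_of_abs_le hb2)
    rw [abs_le]; constructor <;> nlinarith [sq_nonneg b2]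
  have hσ2 : σ ^ 2 ≤ δ ^ 2 := by gcongr
  constructor
  · have e1 : b1 - v = k1 * (b1 ^ 2 - σ ^ 2) / 2 := by linarith
    have e2 : |b1 - v| ≤ M * δ ^ 2 / 2 := by
      rw [e1, abs_div, abs_two]
      have := abs_mul_le' hk1 (sq1.trans hσ2)
      linarith
    have e3 : |b1 + v| ≤ 2 * δ := (abs_add_le _ _).trans (by linarith)
    have e4 : b1 - v - k * (v ^ 2 - σ ^ 2) / 2 = (k1 - k) * (b1 ^ 2 - σ ^ 2) / 2 + k * ((b1 - v) * (b1 + v)) / 2 := by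
      linear_combination e1
    rw [e4]
    refine (abs_add_le _ _).trans ?_
    rw [abs_div, abs_div, abs_two]
    have t1 := abs_mul_le' h1 (sq1.trans hσ2)
    have t2 := abs_mul_le' hk (abs_mul_le' e2 e3)
    have hd3 : 0 < δ ^ 3 := by positivity
    have : M * δ ^ 3 ≤ M ^ 2 * δ ^ 3 := by gcongr
    nlinarith
  · have e : (b2 - b1) * (1 - k1 * (b1 + b2) / 2) = (k2 - k1) * (b2 ^ 2 - σ ^ 2) / 2 := by
      linear_combination r2 - r1
    have t1 := abs_mul_le' h2 (sq2.trans hσ2)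
    have t2 : |k1 * (b1 + b2)| ≤ M * (2 * δ) := abs_mul_le' hk1 ((abs_add_le _ _).trans (by linarith))
    have t3 : 1/2 ≤ 1 - k1 * (b1 + b2) / 2 := by
      have := le_of_abs_le t2
      linarith
    have t4 : |b2 - b1| * (1 - k1 * (b1 + b2) / 2) ≤ M * δ ^ 3 := by
      rw [← abs_of_pos (show 0 < 1 - k1 * (b1 + b2) / 2 by linarith), ← abs_mul, e, abs_div, abs_two]
      nlinarith
    nlinarith [abs_nonneg (b2 - b1)]

noncomputable def Pol (k σ h v : ℝ) : ℝ := 2 * h - h ^ 3 * k ^ 2 / 3 - 2 * h * k * v - h * k ^ 2 * (v ^ 2 - σ ^ 2)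

lemma scal_est {M δ σ h v b1 d k k' x1 x2 x3 y1 y2 y3 a p z : ℝ} (hM : 1 ≤ M)
    (hδ : 0 < δ) (hδ1 : δ ≤ 1) (hMδ : 100 * M ^ 3 * δ ≤ 1)  (hσ : σ ≤ δ)
    (hh : δ / 4 ≤ h) (hh' : h ≤ 3 * δ / 4) (hv : |v| ≤ σ) (hb1 : |b1| ≤ σ) 
    (hK : |k| ≤ M) (hK' : |k'| ≤ M)
    (hw : |b1 - v - k * (v ^ 2 - σ ^ 2) / 2| ≤ M ^ 2 * δ ^ 3) (hbb : |d| ≤ 2 * M * δ ^ 3)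
    (x1' : |x1| ≤ M * δ ^ 4) (y1' : |y1| ≤ M * δ ^ 4) (x2' : |x2| ≤ M * δ ^ 3) (y2' : |y2| ≤ M * δ ^ 3)
    (x3' : |x3| ≤ M * δ) (y3' : |y3| ≤ 1)
    (ha : a = Pol k σ h v + (x1 - 2 * h * k * (b1 - v - k * (v ^ 2 - σ ^ 2) / 2)
      + b1 * x2 + d * x3))
    (hp : p = h ^ 3 / 3 * k' + y1 + b1 * y2 + d * y3)
    (hz : 0 ≤ z) (hsq : z ^ 2 = a ^ 2 + p ^ 2) :
    Pol k σ h v - 56 * M ^ 3 * δ ^ 4 ≤ a ∧ z ≤ Pol k σ h v + 56 * M ^ 3 * δ ^ 4 := by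
  have hM0 : 0 < M := by linarith
  have hMsq : M ≤ M ^ 2 := le_self_pow₀ hM (by norm_num)
  have hM23 : M ^ 2 ≤ M ^ 3 := pow_le_pow_right₀ hM (by norm_num)
  have hM3 : M ≤ M ^ 3 := by linarith
  have h0 : 0 < h := by linarith
  have hhδ : h ≤ δ := by linarith
  have hp3 : h ^ 3 ≤ δ ^ 3 := by gcongr
  have hd4 : 0 < δ ^ 4 := by positivity
  have hd3 : 0 < δ ^ 3 := by positivity
  have hd43 : δ ^ 4 ≤ δ ^ 3 := pow_le_pow_of_le_one hδ.le hδ1 (by norm_num)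
  have hMd4 : M * δ ^ 4 ≤ M ^ 3 * δ ^ 4 := by gcongr
  have hM2d4 : M ^ 2 * δ ^ 4 ≤ M ^ 3 * δ ^ 4 := by gcongr
  have a2 : |2 * h * k * (b1 - v - k * (v ^ 2 - σ ^ 2) / 2)| ≤ 2 * (M ^ 3 * δ ^ 4) := by
    rw [show 2 * (M ^ 3 * δ ^ 4) = 2 * δ * M * (M ^ 2 * δ ^ 3) by ring]
    refine abs_mul_le' (abs_mul_le' ?_ hK) hw
    rw [abs_of_pos (by linarith)]; linarith
  have a3 := abs_mul_le' (hb1.trans hσ) x2'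
  have a4 := abs_mul_le' hbb x3'
  have q1 := abs_mul_le' (show |h ^ 3 / 3| ≤ δ ^ 3 / 3 by rw [abs_of_pos (by positivity)]; linarith) hK'
  have q3 := abs_mul_le' (hb1.trans hσ) y2'
  have q4 := abs_mul_le' hbb y3'
  rw [show δ * (M * δ ^ 3) = M * δ ^ 4 by ring] at a3 q3
  rw [show 2 * M * δ ^ 3 * (M * δ) = 2 * (M ^ 2 * δ ^ 4) by ring] at a4
  rw [show δ ^ 3 / 3 * M = M * δ ^ 3 / 3 by ring] at q1
  rw [show 2 * M * δ ^ 3 * 1 = 2 * (M * δ ^ 3) by ring] at q4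
  have hMd3 : 0 < M * δ ^ 3 := by positivity
  have hMM : 0 < M ^ 3 * δ ^ 4 := by positivity
  rw [abs_le] at x1' a2 a3 a4 q1 y1' q3 q4
  have haP : |a - Pol (k) σ h v| ≤ 6 * M ^ 3 * δ ^ 4 := by
    rw [ha, abs_le]; constructor <;> linarith
  have hpb : |p| ≤ 5 * M * δ ^ 3 := by
    have : M * δ ^ 4 ≤ M * δ ^ 3 := by gcongr
    rw [hp, abs_le]; constructor <;> linarith
  rw [abs_le] at haP
  have hPlow : 2 * h - M ^ 2 * δ ^ 3 - 2 * δ * M * δ ≤ Pol (k) σ h v := by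
    unfold Pol
    have hK2 : k ^ 2 ≤ M ^ 2 := sq_le_sq' (neg_le_of_abs_le hK) (le_of_abs_le hK)
    have t1 : h ^ 3 * k ^ 2 ≤ δ ^ 3 * M ^ 2 := by gcongr
    have t2 : 2 * h * k * v ≤ 2 * δ * M * δ := by
      refine le_of_abs_le (abs_mul_le' (abs_mul_le' ?_ hK) (hv.trans hσ))
      rw [abs_of_pos (by linarith)]; linarith
    have t3 : h * k ^ 2 * (v ^ 2 - σ ^ 2) ≤ 0 := by
      have : v ^ 2 ≤ σ ^ 2 := sq_le_sq' (neg_le_of_abs_le hv) (le_of_abs_le hv)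
      exact mul_nonpos_of_nonneg_of_nonpos (by positivity) (by linarith)
    have t4 := mul_nonneg hd3.le (sq_nonneg M)
    linarith
  have halow : δ / 4 ≤ a := by
    have s1 : M ^ 3 * δ ≤ 1 / 100 := by linarith
    have s2 : M * δ ≤ 1 / 100 := (mul_le_mul_of_nonneg_right hM3 hδ.le).trans s1
    have s3 : M ^ 2 * δ ≤ 1 / 100 := (mul_le_mul_of_nonneg_right hM23 hδ.le).trans s1
    have d2 : δ ^ 2 ≤ δ := by rw [sq]; exact mul_le_of_le_one_left hδ.le hδ1
    have u1 : M ^ 2 * δ ^ 3 ≤ δ / 100 := by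
      calc M ^ 2 * δ ^ 3 = M ^ 2 * δ * δ ^ 2 := by ring
        _ ≤ 1 / 100 * δ := by gcongr
        _ = _ := by ring
    have u2 : M ^ 3 * δ ^ 4 ≤ δ / 100 := by
      calc M ^ 3 * δ ^ 4 = M ^ 3 * δ * (δ ^ 2 * δ) := by ring
        _ ≤ 1 / 100 * (1 * δ) := by gcongr; linarith
        _ = _ := by ring
    have u3 : 2 * δ * M * δ ≤ δ / 50 := by
      have := mul_le_mul_of_nonneg_left s2 hδ.le
      linarith
    linarith
  refine ⟨by linarith, ?_⟩
  have hnZ : z ≤ a + 50 * M ^ 2 * δ ^ 5 := by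
    have hp2 : p ^ 2 ≤ 25 * M ^ 2 * δ ^ 6 := by
      have := sq_le_sq' (neg_le_of_abs_le hpb) (le_of_abs_le hpb)
      calc p ^ 2 ≤ _ := this
        _ = _ := by ring
    have hpos : 0 < 50 * M ^ 2 * δ ^ 5 := by positivity
    refine abs_le_of_sq_le_sq' (a := z) (b := a + 50 * M ^ 2 * δ ^ 5) ?_ (by linarith) |>.2
    rw [hsq]
    have t : 25 * M ^ 2 * δ ^ 6 ≤ 2 * a * (50 * M ^ 2 * δ ^ 5) := by
      have : 0 < M ^ 2 * δ ^ 5 := by positivity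
      have := mul_le_mul_of_nonneg_right halow this.le
      linarith
    have t5 := sq_nonneg (50 * M ^ 2 * δ ^ 5)
    linarith [add_sq a (50 * M ^ 2 * δ ^ 5)]
  have : M ^ 2 * δ ^ 5 ≤ M ^ 3 * δ ^ 4 := by
    calc M ^ 2 * δ ^ 5 = M ^ 2 * (δ ^ 4 * δ) := by ring
      _ ≤ M ^ 3 * (δ ^ 4 * 1) := by gcongr
      _ = _ := by ring
  linarith

lemma Frame.pointwise {γ T N K s M} (F : Frame γ T N K s) (D : TData γ T N K M) {δ σ h v b1 b2 : ℝ}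
    (hδ : 0 < δ) (hδ1 : δ ≤ 1) (hMδ : 100 * M ^ 3 * δ ≤ 1) (hσ0 : 0 ≤ σ) (hσ : σ ≤ δ)
    (hh : δ / 4 ≤ h) (hh' : h ≤ 3 * δ / 4) (hv : |v| ≤ σ) (hb1 : |b1| ≤ σ) (hb2 : |b2| ≤ σ)
    (r1 : b1 - K (δ / 2 - h) * (b1 ^ 2 - σ ^ 2) / 2 = v)
    (r2 : b2 - K (δ / 2 + h) * (b2 ^ 2 - σ ^ 2) / 2 = v) :
    Pol (K (δ / 2)) σ h v - 56 * M ^ 3 * δ ^ 4 ≤ inner ℝ ((γ (δ / 2 + h) + b2 • N (δ / 2 + h)) - (γ (δ / 2 - h) + b1 • N (δ / 2 - h))) (T (δ / 2)) ∧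
    ‖(γ (δ / 2 + h) + b2 • N (δ / 2 + h)) - (γ (δ / 2 - h) + b1 • N (δ / 2 - h))‖ ≤ Pol (K (δ / 2)) σ h v + 56 * M ^ 3 * δ ^ 4 := by
  set c := δ / 2 with hc
  have hM := D.one
  have hM0 : 0 < M := by linarith
  have hMsq : M ≤ M ^ 2 := le_self_pow₀ hM (by norm_num)
  have hM23 : M ^ 2 ≤ M ^ 3 := pow_le_pow_right₀ hM (by norm_num)
  have hM3 : M ≤ M ^ 3 := by linarith
  have h0 : 0 < h := by linarith
  have hhδ : h ≤ δ := by linarith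
  have mc : c ∈ Icc (-1:ℝ) 2 := ⟨by linarith, by linarith⟩
  have mp : c + h ∈ Icc (-1:ℝ) 2 := ⟨by linarith, by linarith⟩
  have mm : c - h ∈ Icc (-1:ℝ) 2 := ⟨by linarith, by linarith⟩
  have hK := D.K0 c mc
  have hK' := D.K1 c mc
  obtain ⟨hw, hbb⟩ := b_est (k := K c) hM hδ hMδ hσ0 hσ hv hb1 hb2 hK (D.K0 _ mm)
    ((D.KL _ mm _ mc).trans (by
      rw [show c - h - c = -h by ring, abs_neg, abs_of_pos h0]; gcongr))
    ((D.KL _ mp _ mm).trans (by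
      rw [show c + h - (c - h) = 2 * h by ring, abs_of_pos (by linarith)]; nlinarith)) r1 r2
  have g5 := D.g5 c h h0.le (by linarith) (by linarith)
  have n3 := D.n3 c h h0.le (by linarith) (by linarith)
  have nl := D.NL _ mp _ mc
  rw [show c + h - c = h by ring, abs_of_pos h0] at nl
  obtain ⟨oTT, oNN, oTN, oNT, onorm⟩ := F.orth c
  set r₁ := γ (c + h) - γ (c - h) - (2 * h) • T c - (h ^ 3 / 3) • (deriv K c • N c - (K c)^2 • T c) with hr₁
  set r₂ := N (c + h) - N (c - h) + (2 * h * K c) • T c with hr₂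
  set Z := (γ (c + h) + b2 • N (c + h)) - (γ (c - h) + b1 • N (c - h)) with hZ
  have hZeq : Z = (2 * h) • T c + (h ^ 3 / 3) • (deriv K c • N c - (K c)^2 • T c) + r₁ 
      + b1 • (r₂ - (2 * h * K c) • T c) + (b2 - b1) • N (c + h) := by
    rw [hZ, hr₁, hr₂]; module
  have ib : ∀ x y : EuclideanSpace ℝ (Fin 2), ‖y‖ = 1 → |inner ℝ x y| ≤ ‖x‖ := by
    intro x y hy
    have := abs_real_inner_le_norm x y
    rwa [hy, mul_one] at this
  have x1 := (ib r₁ (T c) (F.Tn c)).trans g5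
  have y1 := (ib r₁ (N c) (F.Nn c)).trans g5
  have x2 := (ib r₂ (T c) (F.Tn c)).trans n3
  have y2 := (ib r₂ (N c) (F.Nn c)).trans n3
  have x3 := (ib (N (c + h) - N c) (T c) (F.Tn c)).trans nl
  have y3 := (ib (N (c + h)) (N c) (F.Nn c)).trans (F.Nn _).le
  rw [inner_sub_left, oNT, sub_zero] at x3
  have hp3 : h ^ 3 ≤ δ ^ 3 := by gcongr
  have hp5 : h ^ 5 ≤ δ ^ 4 := by
    calc h ^ 5 ≤ δ ^ 5 := by gcongr
      _ = δ ^ 4 * δ := by ring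
      _ ≤ δ ^ 4 := by nlinarith [pow_pos hδ 4]
  have ha : inner ℝ Z (T c) = Pol (K c) σ h v + (inner ℝ r₁ (T c) 
      - 2 * h * K c * (b1 - v - K c * (v ^ 2 - σ ^ 2) / 2)
      + b1 * inner ℝ r₂ (T c) + (b2 - b1) * inner ℝ (N (c + h)) (T c)) := by
    rw [hZeq]
    simp only [inner_add_left, inner_sub_left, real_inner_smul_left, oTT, oNT, Pol]
    ring
  have hp : inner ℝ Z (N c) = h ^ 3 / 3 * deriv K c + inner ℝ r₁ (N c) 
      + b1 * inner ℝ r₂ (N c) + (b2 - b1) * inner ℝ (N (c + h)) (N c) := by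
    rw [hZeq]
    simp only [inner_add_left, inner_sub_left, real_inner_smul_left, oTN, oNN]
    ring
  have x1' : |inner ℝ r₁ (T c)| ≤ M * δ ^ 4 := x1.trans (by gcongr)
  have y1' : |inner ℝ r₁ (N c)| ≤ M * δ ^ 4 := y1.trans (by gcongr)
  have x2' : |inner ℝ r₂ (T c)| ≤ M * δ ^ 3 := x2.trans (by gcongr)
  have y2' : |inner ℝ r₂ (N c)| ≤ M * δ ^ 3 := y2.trans (by gcongr)
  have x3' : |inner ℝ (N (c + h)) (T c)| ≤ M * δ := x3.trans (by gcongr)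
  exact scal_est hM hδ hδ1 hMδ hσ hh hh' hv hb1 hK hK' hw hbb x1' y1' x2' y2' x3' y3 ha hp
    (norm_nonneg Z) (onorm Z)

lemma int_poly (a c0 c1 c2 c3 : ℝ) (ha : 0 < a) :
    ∫ x in Ioo (-a) a, (c0 + c1 * x + c2 * x ^ 2 + c3 * x ^ 3) = 2 * a * c0 + 2 * a ^ 3 / 3 * c2 := by
  rw [← integral_Ioc_eq_integral_Ioo, ← intervalIntegral.integral_of_le (by linarith)]
  have hd : ∀ x ∈ uIcc (-a) a, HasDerivAt (fun x => c0 * x + c1 / 2 * x ^ 2 + c2 / 3 * x ^ 3 + c3 / 4 * x ^ 4)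
      (c0 + c1 * x + c2 * x ^ 2 + c3 * x ^ 3) x := by
    intro x _
    have := ((((hasDerivAt_id x).const_mul c0).add ((hasDerivAt_pow 2 x).const_mul (c1 / 2))).add 
      ((hasDerivAt_pow 3 x).const_mul (c2 / 3))).add ((hasDerivAt_pow 4 x).const_mul (c3 / 4))
    refine this.congr_deriv ?_
    norm_num
    ring
  rw [intervalIntegral.integral_eq_sub_of_hasDerivAt hd]
  · ring
  · apply Continuous.intervalIntegrable; fun_prop

lemma vol_rect {a b c d : ℝ} :
    (volume : Measure (ℝ × ℝ)) (Ioo a b ×ˢ Ioo c d) = ENNReal.ofReal (b - a) * ENNReal.ofReal (d - c) := by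
  rw [Measure.volume_eq_prod, Measure.prod_prod]; simp

lemma integrable_nr {E : Type*} [NormedAddCommGroup E] {f : ℝ × ℝ → E} (hf : Continuous f)
    {a b c d : ℝ} (hab : a < b) (hcd : c < d) :
    IntegrableOn f (Ioo a b ×ˢ Ioo c d) volume ∧ Integrable f (normRestrict (Ioo a b ×ˢ Ioo c d)) := by
  have h : IntegrableOn f (Ioo a b ×ˢ Ioo c d) volume :=
    (hf.continuousOn.integrableOn_compact (isCompact_Icc.prod isCompact_Icc)).mono_set
      (prod_mono (Ioo_subset_Icc_self (a := a) (b := b)) (Ioo_subset_Icc_self (a := c) (b := d)))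
  refine ⟨h, h.smul_measure ?_⟩
  rw [vol_rect]
  simp [hab, hcd]

lemma int_Pol (k δ σ ε : ℝ) (hσ : 0 < σ) (hε : 0 < ε) :
    ∫ p : ℝ × ℝ, Pol k σ (δ / 2 - p.1) p.2 ∂(normRestrict (Ioo (0 - ε) (0 + ε) ×ˢ Ioo (-σ) σ)) =
      δ - k ^ 2 * δ ^ 3 / 24 - k ^ 2 * δ * ε ^ 2 / 6 + k ^ 2 * δ * σ ^ 2 / 3 := by
  have hc : Continuous (fun p : ℝ × ℝ => Pol k σ (δ / 2 - p.1) p.2) := by unfold Pol; fun_prop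
  have hi := (integrable_nr hc (show 0 - ε < 0 + ε by linarith) (show -σ < σ by linarith)).1
  unfold normRestrict
  rw [integral_smul_measure, vol_rect, ENNReal.toReal_inv, ENNReal.toReal_mul,
    ENNReal.toReal_ofReal (by linarith), ENNReal.toReal_ofReal (by linarith)]
  rw [Measure.volume_eq_prod] at hi ⊢
  rw [setIntegral_prod _ hi]
  have inner1 : ∀ x : ℝ, ∫ y in Ioo (-σ) σ, Pol k σ (δ / 2 - x) y = 
      2 * σ * (2 * (δ / 2 - x) - (δ / 2 - x) ^ 3 * k ^ 2 / 3 + (δ / 2 - x) * k ^ 2 * σ ^ 2)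
      - 2 * σ ^ 3 / 3 * ((δ / 2 - x) * k ^ 2) := by
    intro x
    rw [← sub_eq_zero]
    have := int_poly σ (2 * (δ / 2 - x) - (δ / 2 - x) ^ 3 * k ^ 2 / 3 + (δ / 2 - x) * k ^ 2 * σ ^ 2)
      (-(2 * (δ / 2 - x) * k)) (-((δ / 2 - x) * k ^ 2)) 0 hσ
    have e : ∀ y, Pol k σ (δ / 2 - x) y = (2 * (δ / 2 - x) - (δ / 2 - x) ^ 3 * k ^ 2 / 3 + (δ / 2 - x) * k ^ 2 * σ ^ 2)
      + (-(2 * (δ / 2 - x) * k)) * y + (-((δ / 2 - x) * k ^ 2)) * y ^ 2 + 0 * y ^ 3 := by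
      intro y; unfold Pol; ring
    simp_rw [e]
    rw [this]; ring
  simp only [inner1]
  have e : ∀ x : ℝ, 2 * σ * (2 * (δ / 2 - x) - (δ / 2 - x) ^ 3 * k ^ 2 / 3 + (δ / 2 - x) * k ^ 2 * σ ^ 2)
      - 2 * σ ^ 3 / 3 * ((δ / 2 - x) * k ^ 2) = 
      (2 * σ * (δ - δ ^ 3 / 24 * k ^ 2 + δ / 2 * k ^ 2 * σ ^ 2) - 2 * σ ^ 3 / 3 * (δ / 2 * k ^ 2)) +
      (2 * σ * (-2 + δ ^ 2 / 4 * k ^ 2 - k ^ 2 * σ ^ 2) + 2 * σ ^ 3 / 3 * k ^ 2) * x +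
      (-(2 * σ * (δ / 2 * k ^ 2))) * x ^ 2 + (2 * σ * (k ^ 2 / 3)) * x ^ 3 := by intro x; ring
  simp only [e]
  rw [zero_sub, zero_add, int_poly _ _ _ _ _ hε, smul_eq_mul]
  field_simp
  ring

lemma final_est {M δ σ ε k k0 L W : ℝ} (hM : 1 ≤ M) (hδ : 0 < δ) (hδ1 : δ ≤ 1)
    (hσ0 : 0 ≤ σ) (hσ : σ ≤ δ) (hε0 : 0 ≤ ε) (hε : ε ≤ δ) (hk : |k| ≤ M) (hk0 : |k0| ≤ M) (hkk : |k - k0| ≤ M * δ)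
    (hL : |L - (δ - k ^ 2 * δ ^ 3 / 24)| ≤ 56 * M ^ 3 * δ ^ 4)
    (hW : |W - (δ - k ^ 2 * δ ^ 3 / 24 - k ^ 2 * δ * ε ^ 2 / 6 + k ^ 2 * δ * σ ^ 2 / 3)| ≤ 56 * M ^ 3 * δ ^ 4) :
    |W - L * (1 - ε ^ 2 * k0 ^ 2 / 6 + σ ^ 2 * k0 ^ 2 / 3)| ≤ 200 * M ^ 5 * δ ^ 4 := by
  have hM0 : 0 < M := by linarith
  have hs2 : σ ^ 2 ≤ δ ^ 2 := by gcongr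
  have he2 : ε ^ 2 ≤ δ ^ 2 := by gcongr
  have hu : |σ ^ 2 / 3 - ε ^ 2 / 6| ≤ δ ^ 2 := by
    have := sq_nonneg σ; have := sq_nonneg ε
    rw [abs_le]; constructor <;> linarith
  have h1 : |(k - k0) * (k + k0) * δ * (σ ^ 2 / 3 - ε ^ 2 / 6)| ≤ M * δ * (2 * M) * δ * δ ^ 2 := 
    abs_mul_le' (abs_mul_le' (abs_mul_le' hkk ((abs_add_le _ _).trans (by linarith))) (abs_of_pos hδ).le) hu
  have hk2 : |k ^ 2| ≤ M ^ 2 := by rw [abs_pow]; gcongr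
  have hk02 : |k0 ^ 2| ≤ M ^ 2 := by rw [abs_pow]; gcongr
  have hd43 : δ ^ 4 ≤ δ ^ 3 := pow_le_pow_of_le_one hδ.le hδ1 (by norm_num)
  have hd54 : δ ^ 5 ≤ δ ^ 4 := pow_le_pow_of_le_one hδ.le hδ1 (by norm_num)
  have hd3 : 0 < δ ^ 3 := by positivity
  have hM23 : M ^ 2 ≤ M ^ 3 := pow_le_pow_right₀ hM (by norm_num)
  have hM25 : M ^ 2 ≤ M ^ 5 := pow_le_pow_right₀ hM (by norm_num)
  have hM35 : M ^ 3 ≤ M ^ 5 := pow_le_pow_right₀ hM (by norm_num)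
  have h2 : |k ^ 2 * δ ^ 3| ≤ M ^ 2 * δ ^ 3 := abs_mul_le' hk2 (abs_of_pos hd3).le
  have h2' : M ^ 2 * δ ^ 3 ≤ M ^ 3 * δ ^ 3 := by gcongr
  have h2'' : M ^ 3 * δ ^ 4 ≤ M ^ 3 * δ ^ 3 := by gcongr
  rw [abs_le] at hL h2 hW
  have h3 : |δ - L| ≤ 57 * M ^ 3 * δ ^ 3 := by
    rw [abs_le]; constructor <;> linarith
  have h4 := abs_mul_le' (abs_mul_le' hk02 hu) h3
  have h4' : M ^ 2 * δ ^ 2 * (57 * M ^ 3 * δ ^ 3) ≤ 57 * (M ^ 5 * δ ^ 4) := by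
    calc _ = 57 * (M ^ 5 * δ ^ 5) := by ring
      _ ≤ _ := by gcongr
  have h5 : M ^ 2 * δ ^ 4 ≤ M ^ 5 * δ ^ 4 := by gcongr
  have h6 : M ^ 3 * δ ^ 4 ≤ M ^ 5 * δ ^ 4 := by gcongr
  rw [show M * δ * (2 * M) * δ * δ ^ 2 = 2 * (M ^ 2 * δ ^ 4) by ring] at h1
  have hpos : 0 < M ^ 5 * δ ^ 4 := by positivity
  rw [abs_le] at h1 h4
  rw [abs_le]
  constructor <;> nlinarith only [h1.1, h1.2, h4.1, h4.2, h4', h5, h6, hpos, hW.1, hW.2, hL.1, hL.2]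

theorem planar_curve_wasserstein_expansion
    (δ₀ : ℝ) (hδ₀ : 0 < δ₀)
    (γ : ℝ → EuclideanSpace ℝ (Fin 2)) (hγ : ContDiff ℝ (⊤ : ℕ∞) γ)
    (hunit : ∀ α : ℝ, ‖deriv γ α‖ = 1)
    (hcurv : ∀ α ∈ Icc (-δ₀) (2 * δ₀), deriv (deriv γ) α ≠ 0)
    (R : ℝ → ℝ) (hR : ∀ α : ℝ, R α = ‖deriv (deriv γ) α‖⁻¹)
    (n : ℝ → EuclideanSpace ℝ (Fin 2)) (hn : ∀ α : ℝ, n α = R α • deriv (deriv γ) α)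
    (φ : ℝ × ℝ → EuclideanSpace ℝ (Fin 2)) (hφ : ∀ p : ℝ × ℝ, φ p = γ p.1 + p.2 • n p.1)
    (hinj : InjOn φ (Icc (-δ₀) (2 * δ₀) ×ˢ Icc (-δ₀) δ₀))
    (hreach : ∀ α ∈ Icc (-δ₀) (2 * δ₀), δ₀ < R α)
    (μ : ℝ → ℝ → ℝ → Measure (EuclideanSpace ℝ (Fin 2)))
    (hμ : ∀ t σ ε : ℝ, μ t σ ε = normRestrict (φ '' (Ioo (t - ε) (t + ε) ×ˢ Ioo (-σ) σ))) :
    ∃ C > (0:ℝ), ∃ δ₁ ∈ Ioc (0:ℝ) δ₀, ∀ δ ∈ Ioc (0:ℝ) δ₁, ∀ σ ε : ℝ,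
      0 < σ → 0 < ε → max σ ε ≤ δ / 4 →
      |W1 (μ 0 σ ε) (μ δ σ ε) -
        ‖γ 0 - γ δ‖ * (1 - ε ^ 2 / (6 * R 0 ^ 2) + σ ^ 2 / (3 * R 0 ^ 2))| ≤ C * δ ^ 4 := by
  obtain ⟨T, N, K, s, F, hF⟩ := exists_frame δ₀ hδ₀ γ hγ hunit hcurv R hR n hn
  obtain ⟨M, D⟩ := F.tdata
  have hM := D.one
  have hM0 : 0 < M := by linarith
  have hM3 : 1 ≤ M ^ 3 := one_le_pow₀ hM
  refine ⟨200 * M ^ 5, by positivity, min δ₀ (1 / (100 * M ^ 3)), ⟨lt_min hδ₀ (by positivity), min_le_left _ _⟩, ?_⟩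
  rintro δ ⟨hδ, hδ'⟩ σ ε hσ hε hmax
  have hδδ : δ ≤ δ₀ := hδ'.trans (min_le_left _ _)
  have hMδ : 100 * M ^ 3 * δ ≤ 1 := by
    have := hδ'.trans (min_le_right _ _)
    rw [le_div_iff₀ (by positivity)] at this
    linarith
  have hδ1 : δ ≤ 1 := by nlinarith
  have hσ4 : σ ≤ δ / 4 := (le_max_left _ _).trans hmax
  have hε4 : ε ≤ δ / 4 := (le_max_right _ _).trans hmax
  have hKδ : ∀ α ∈ Icc (-δ₀) (2 * δ₀), 0 < K α ∧ K α * δ₀ < 1 := by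
    intro α hα
    obtain ⟨_, h1, h2⟩ := hF α hα
    refine ⟨h2, ?_⟩
    rw [← h1]
    exact mul_lt_mul_of_pos_left (hreach α hα) h2
  have hφ' : ∀ α ∈ Icc (-δ₀) (2 * δ₀), ∀ β, φ (α, β) = γ α + β • N α := by
    intro α hα β
    rw [hφ, (hF α hα).1]
  have hdom : ∀ x ∈ Ioo (0 - ε) (0 + ε), x ∈ Icc (-δ₀) (2 * δ₀) ∧ δ - x ∈ Icc (-δ₀) (2 * δ₀) := by
    intro x hx
    exact ⟨⟨by linarith [hx.1], by linarith [hx.2]⟩, ⟨by linarith [hx.2], by linarith [hx.1]⟩⟩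
  have hμ0 := F.mu_eq hσ (by linarith) (fun x hx => (hdom x hx).1) hKδ φ hφ' hinj
  have hμδ := F.mu_eq (a := δ - ε) (b := δ + ε) hσ (by linarith) 
    (fun x hx => ⟨by linarith [hx.1], by linarith [hx.2]⟩) hKδ φ hφ' hinj
  have hrefl : Measurable (fun p : ℝ × ℝ => (δ - p.1, p.2)) := by fun_prop
  rw [← normRestrict_refl, Measure.map_map (F.Psi_cont σ).measurable hrefl] at hμδ
  rw [hμ, hμ, hμ0, hμδ]
  have hlt1 : 0 - ε < 0 + ε := by linarith
  have hlt2 : -σ < σ := by linarith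
  haveI := normRestrict_prob hlt1 hlt2
  have hgc : Continuous (Psi γ N K σ ∘ fun p : ℝ × ℝ => (δ - p.1, p.2)) :=
    (F.Psi_cont σ).comp (by fun_prop)
  have hPc : Continuous (fun p : ℝ × ℝ => Pol (K (δ / 2)) σ (δ / 2 - p.1) p.2) := by unfold Pol; fun_prop
  have hpt : ∀ᵐ p ∂(normRestrict (Ioo (0 - ε) (0 + ε) ×ˢ Ioo (-σ) σ)), 
      Pol (K (δ / 2)) σ (δ / 2 - p.1) p.2 - 56 * M ^ 3 * δ ^ 4 ≤ 
        inner ℝ ((Psi γ N K σ ∘ fun p : ℝ × ℝ => (δ - p.1, p.2)) p - Psi γ N K σ p) (T (δ / 2)) ∧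
      ‖(Psi γ N K σ ∘ fun p : ℝ × ℝ => (δ - p.1, p.2)) p - Psi γ N K σ p‖ ≤ 
        Pol (K (δ / 2)) σ (δ / 2 - p.1) p.2 + 56 * M ^ 3 * δ ^ 4 := by
    have hm : MeasurableSet (Ioo (0 - ε) (0 + ε) ×ˢ Ioo (-σ) σ) := measurableSet_Ioo.prod measurableSet_Ioo
    unfold normRestrict
    refine Measure.ae_smul_measure ?_ _
    filter_upwards [ae_restrict_mem hm] with p hp
    obtain ⟨hα, hv⟩ := hp
    obtain ⟨d1, d2⟩ := hdom p.1 hα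
    have facts : ∀ α ∈ Icc (-δ₀) (2 * δ₀), |Bf σ (K α) p.2| ≤ σ ∧ 
        Bf σ (K α) p.2 - K α * ((Bf σ (K α) p.2) ^ 2 - σ ^ 2) / 2 = p.2 := by
      intro α hα
      obtain ⟨k1, k2⟩ := hKδ α hα
      have k3 : K α * σ < 1 := by nlinarith
      have hb := Bf_mem hσ k1.le k3 hv
      exact ⟨abs_le.2 ⟨hb.1.le, hb.2.le⟩, Bf_rel (Bf_arg hσ k1.le k3 hv.2.le).le⟩
    have e1 : δ / 2 - (δ / 2 - p.1) = p.1 := by ring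
    have e2 : δ / 2 + (δ / 2 - p.1) = δ - p.1 := by ring
    have := F.pointwise D (σ := σ) (h := δ / 2 - p.1) (v := p.2) (b1 := Bf σ (K p.1) p.2) 
      (b2 := Bf σ (K (δ - p.1)) p.2) hδ hδ1 hMδ hσ.le (by linarith) (by linarith [hα.2]) (by linarith [hα.1])
      (abs_le.2 ⟨hv.1.le, hv.2.le⟩) (facts _ d1).1 (facts _ d2).1
      (by rw [e1]; exact (facts _ d1).2) (by rw [e2]; exact (facts _ d2).2)
    rw [e1, e2] at this
    exact this
  have hW := W1_bound _ (Psi γ N K σ) (Psi γ N K σ ∘ fun p : ℝ × ℝ => (δ - p.1, p.2)) 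
    (F.Psi_cont σ).measurable hgc.measurable (integrable_nr (F.Psi_cont σ) hlt1 hlt2).2
    (integrable_nr hgc hlt1 hlt2).2 (T (δ / 2)) (F.Tn _) _ (integrable_nr hPc hlt1 hlt2).2 _ 
    (hpt.mono fun p hp => hp.1) (hpt.mono fun p hp => hp.2)
  rw [int_Pol _ _ _ _ hσ hε] at hW
  have hL : |‖γ 0 - γ δ‖ - (δ - K (δ / 2) ^ 2 * δ ^ 3 / 24)| ≤ 56 * M ^ 3 * δ ^ 4 := by
    have := F.pointwise D (σ := 0) (h := δ / 2) (v := 0) (b1 := 0) (b2 := 0) hδ hδ1 hMδ le_rfl hδ.le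
      (by linarith) (by linarith) (by simp) (by simp) (by simp) (by simp) (by simp)
    have e : Pol (K (δ / 2)) 0 (δ / 2) 0 = δ - K (δ / 2) ^ 2 * δ ^ 3 / 24 := by unfold Pol; ring
    rw [e, sub_self, add_halves, zero_smul, zero_smul, add_zero, add_zero] at this
    have h3 := real_inner_le_norm (γ δ - γ 0) (T (δ / 2))
    rw [F.Tn, mul_one] at h3
    rw [norm_sub_rev, abs_le]
    constructor <;> linarith [this.1, this.2]
  have m0 : (0:ℝ) ∈ Icc (-1:ℝ) 2 := by norm_num
  have mh : δ / 2 ∈ Icc (-1:ℝ) 2 := ⟨by linarith, by linarith⟩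
  have hkk := D.KL _ mh _ m0
  rw [sub_zero, abs_of_pos (show 0 < δ / 2 by linarith)] at hkk
  have hfin := final_est hM hδ hδ1 hσ.le (by linarith) hε.le (by linarith) (D.K0 _ mh) (D.K0 _ m0)
    (hkk.trans (by nlinarith)) hL hW
  have hR0 := (hF 0 ⟨by linarith, by linarith⟩).2.1
  have hRne : R 0 ≠ 0 := by intro h; rw [h] at hR0; simp at hR0
  have hK0 : K 0 = (R 0)⁻¹ := eq_inv_of_mul_eq_one_left hR0
  rw [hK0] at hfin
  have e : (1 - ε ^ 2 * (R 0)⁻¹ ^ 2 / 6 + σ ^ 2 * (R 0)⁻¹ ^ 2 / 3) = 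
      1 - ε ^ 2 / (6 * R 0 ^ 2) + σ ^ 2 / (3 * R 0 ^ 2) := by
    field_simp
  rw [e] at hfin
  exact hfin
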